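/- Let A ≥ 0, B ≥ 0 and C ≥ 0 with A ≤ B. Assume there exist τ₀ > 0, μ > 0 and ν > 0 such that A ≤ e^{−ντ} B + e^{μτ} C for all τ ≥ τ₀. Then A ≤ K B^{1−δ} C^{δ}, where K = max(2, e^{μτ₀}) and δ = ν/(ν+μ) ∈ (0,1). -/

import Mathlib

open Real in
lemma key_h (a : ℝ) (h1 : 1 ≤ a) (h2 : a ≤ 2) : log 2 * (a - 1 / a) ≤ 2 * log a := by
  have hd : ∀ x : ℝ, 0 < x → HasDerivAt (fun x : ℝ => 2 * log x - log 2 * (x - x⁻¹))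
      (2 * x⁻¹ - log 2 * (1 - (-(x ^ 2)⁻¹))) x := by
    intro x hx
    exact ((hasDerivAt_log hx.ne').const_mul 2).sub
      (((hasDerivAt_id x).sub (hasDerivAt_inv hx.ne')).const_mul (log 2))
  have hm : MonotoneOn (fun x : ℝ => 2 * log x - log 2 * (x - x⁻¹)) (Set.Icc 1 2) := by
    apply monotoneOn_of_deriv_nonneg (convex_Icc 1 2)
    · intro x hx
      exact (hd x (by linarith [hx.1])).continuousAt.continuousWithinAt
    · intro x hx
      rw [interior_Icc] at hx
      exact (hd x (by linarith [hx.1])).differentiableAt.differentiableWithinAt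
    · intro x hx
      rw [interior_Icc] at hx
      have hx0 : 0 < x := by linarith [hx.1]
      rw [(hd x hx0).deriv]
      have : 2 * x⁻¹ - log 2 * (1 - (-(x ^ 2)⁻¹)) = (2 * x - log 2 * (x ^ 2 + 1)) / x ^ 2 := by
        field_simp
        ring
      rw [this]
      apply div_nonneg _ (by positivity)
      have := log_two_lt_d9
      have h3 : log 2 * (x ^ 2 + 1) ≤ 0.7 * (x ^ 2 + 1) := by
        apply mul_le_mul_of_nonneg_right (by linarith) (by positivity)
      nlinarith [hx.1, hx.2]
  have := hm (Set.left_mem_Icc.2 (by norm_num)) ⟨h1, h2⟩ h1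
  simp at this
  rw [one_div]
  linarith

open Real in
lemma key_small (a : ℝ) (h1 : 1 ≤ a) (h2 : a ≤ 2) :
    exp (-(log 2 * a)) + exp (-(log 2 * a⁻¹)) ≤ 1 := by
  have hd : ∀ x : ℝ, 0 < x → HasDerivAt
      (fun x : ℝ => exp (-(log 2 * x)) + exp (-(log 2 * x⁻¹)))
      (exp (-(log 2 * x)) * (-(log 2 * 1)) + exp (-(log 2 * x⁻¹)) * (-(log 2 * (-(x ^ 2)⁻¹)))) x := by
    intro x hx
    exact (((hasDerivAt_id x).const_mul (log 2)).neg.exp).add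
      (((hasDerivAt_inv hx.ne').const_mul (log 2)).neg.exp)
  have hm : AntitoneOn (fun x : ℝ => exp (-(log 2 * x)) + exp (-(log 2 * x⁻¹)))
      (Set.Icc 1 2) := by
    apply antitoneOn_of_deriv_nonpos (convex_Icc 1 2)
    · intro x hx
      exact (hd x (by linarith [hx.1])).continuousAt.continuousWithinAt
    · intro x hx
      rw [interior_Icc] at hx
      exact (hd x (by linarith [hx.1])).differentiableAt.differentiableWithinAt
    · intro x hx
      rw [interior_Icc] at hx
      have hx0 : 0 < x := by linarith [hx.1]
      rw [(hd x hx0).deriv]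
      have hk := key_h x hx.1.le hx.2.le
      have hl : 0 < log 2 := log_pos (by norm_num)
      have e : (x ^ 2)⁻¹ = exp (-(2 * log x)) := by
        rw [exp_neg, two_mul, exp_add, exp_log hx0, sq]
      have : exp (-(log 2 * x⁻¹)) * (x ^ 2)⁻¹ ≤ exp (-(log 2 * x)) := by
        rw [e, ← exp_add]
        apply exp_le_exp.2
        rw [one_div] at hk
        linarith
      nlinarith
  have := hm (Set.left_mem_Icc.2 (by norm_num)) ⟨h1, h2⟩ h1
  refine this.trans ?_
  simp [exp_neg, exp_log]
  norm_num

open Real in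
lemma key_large (a : ℝ) (h2 : 2 ≤ a) :
    exp (-(log 2 * a)) + exp (-(log 2 * a⁻¹)) ≤ 1 := by
  have ha : 0 < a := by linarith
  have hl : 0 < log 2 := log_pos (by norm_num)
  set t := exp (-(log 2 * a)) with ht
  have ht0 : 0 < t := exp_pos _
  have ht1 : t < 1 := by
    rw [ht, exp_lt_one_iff]; nlinarith
  have hb := one_add_mul_self_le_rpow_one_add (s := -t) (by linarith) (p := a) (by linarith)
  have hc := one_add_mul_self_le_rpow_one_add (s := 1) (by linarith) (p := a - 1) (by linarith)
  have h2a : (1 + 1 : ℝ) ^ (a - 1) * t = 1 / 2 := by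
    rw [show (1 + 1 : ℝ) = 2 by norm_num, rpow_def_of_pos (by norm_num), ht, ← exp_add,
      show log 2 * (a - 1) + -(log 2 * a) = - log 2 by ring, exp_neg, exp_log (by norm_num)]
    norm_num
  have h3 : a * t ≤ 1 / 2 := by
    rw [← h2a]
    exact mul_le_mul_of_nonneg_right (by linarith) ht0.le
  have h4 : (1 / 2 : ℝ) ≤ (1 - t) ^ a := by
    rw [← sub_eq_add_neg] at hb
    linarith
  have h5 : log (1 / 2) ≤ a * log (1 - t) := by
    rw [← log_rpow (by linarith)]
    exact log_le_log (by norm_num) h4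
  rw [one_div, log_inv] at h5
  have h6 : -(log 2 * a⁻¹) ≤ log (1 - t) := by
    rw [← div_eq_mul_inv, ← neg_div, div_le_iff₀ ha]; linarith
  have := exp_le_exp.2 h6
  rw [exp_log (by linarith)] at this
  linarith

open Real in
lemma key_all (x y : ℝ) (hx : log 2 ≤ x) (hxy : log 2 ^ 2 ≤ x * y) :
    exp (-x) + exp (-y) ≤ 1 := by
  have hl : 0 < log 2 := log_pos (by norm_num)
  have hx0 : 0 < x := by linarith
  have h1 : 1 ≤ x / log 2 := by rw [le_div_iff₀ hl]; linarith
  have h : exp (-(log 2 * (x / log 2))) + exp (-(log 2 * (x / log 2)⁻¹)) ≤ 1 := by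
    rcases le_total (x / log 2) 2 with h | h
    · exact key_small _ h1 h
    · exact key_large _ h
  rw [mul_div_cancel₀ _ hl.ne'] at h
  have : log 2 * (x / log 2)⁻¹ ≤ y := by
    rw [inv_div, ← mul_div_assoc, div_le_iff₀ hx0]; linarith
  have := exp_le_exp.2 (neg_le_neg this)
  linarith

open Real in
lemma core (s τ₀ μ ν L : ℝ) (hτ₀ : 0 < τ₀) (hμ : 0 < μ) (hν : 0 < ν) (hL2 : log 2 ≤ L)
    (hLμ : μ * τ₀ ≤ L) (hs : s < τ₀) (hL : L < ν * s) :
    exp (-ν * (τ₀ - s)) + exp (μ * (τ₀ - s)) ≤ exp L := by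
  have hl : 0 < log 2 := log_pos (by norm_num)
  have hx : L < ν * τ₀ := by nlinarith
  have hconv : ConvexOn ℝ Set.univ (fun u : ℝ => exp (-ν * u) + exp (μ * u)) := by
    apply ConvexOn.add
    · exact convexOn_exp.comp_linearMap (LinearMap.mulLeft ℝ (-ν))
    · exact convexOn_exp.comp_linearMap (LinearMap.mulLeft ℝ μ)
  have hu : τ₀ - s ∈ Set.Icc 0 (τ₀ - L / ν) := by
    constructor
    · linarith
    · have : L / ν ≤ s := by rw [div_le_iff₀ hν]; linarith
      linarith
  have := hconv.le_max_of_mem_Icc (Set.mem_univ _) (Set.mem_univ _) hu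
  refine this.trans (max_le ?_ ?_)
  · have := exp_le_exp.2 hL2
    rw [exp_log (by norm_num)] at this
    simp
    linarith
  · have hx0 : 0 < ν * τ₀ := by positivity
    have hk := key_all (ν * τ₀) (L ^ 2 / (ν * τ₀)) (by linarith) (by
      rw [mul_div_cancel₀ _ hx0.ne']; nlinarith)
    have e1 : exp (-ν * (τ₀ - L / ν)) = exp L * exp (-(ν * τ₀)) := by
      rw [← exp_add]; congr 1; field_simp; ring
    have e2 : exp (μ * (τ₀ - L / ν)) ≤ exp L * exp (-(L ^ 2 / (ν * τ₀))) := by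
      rw [← exp_add]
      apply exp_le_exp.2
      have h1 : μ * (τ₀ - L / ν) = (μ * τ₀) * (1 - L / (ν * τ₀)) := by field_simp
      have h2 : L + -(L ^ 2 / (ν * τ₀)) = L * (1 - L / (ν * τ₀)) := by field_simp; ring
      rw [h1, h2]
      apply mul_le_mul_of_nonneg_right hLμ
      have : L / (ν * τ₀) ≤ 1 := by rw [div_le_one hx0]; exact hx.le
      linarith
    rw [e1]
    nlinarith [exp_pos L]


/-- Interpolation optimization lemma: if `A ≤ e^{−ντ} B + e^{μτ} C` for all `τ ≥ τ₀`,
then `A ≤ K B^{1−δ} C^{δ}` with `K = max(2, e^{μτ₀})` and `δ = ν/(ν+μ) ∈ (0,1)`. -/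
theorem stmt14 (A B C τ₀ μ ν : ℝ)
    (hA : 0 ≤ A) (hB : 0 ≤ B) (hC : 0 ≤ C) (hAB : A ≤ B)
    (hτ₀ : 0 < τ₀) (hμ : 0 < μ) (hν : 0 < ν)
    (hyp : ∀ τ : ℝ, τ₀ ≤ τ → A ≤ Real.exp (-ν * τ) * B + Real.exp (μ * τ) * C) :
    A ≤ max 2 (Real.exp (μ * τ₀)) * B ^ (1 - ν / (ν + μ)) * C ^ (ν / (ν + μ)) ∧
      0 < ν / (ν + μ) ∧ ν / (ν + μ) < 1 := by
  have hsum : 0 < ν + μ := by linarith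
  have hδ0 : 0 < ν / (ν + μ) := by positivity
  have hδ1 : ν / (ν + μ) < 1 := by rw [div_lt_one hsum]; linarith
  refine ⟨?_, hδ0, hδ1⟩
  rcases hB.eq_or_lt with hB0 | hB0
  · have : A = 0 := by linarith
    rw [this]; positivity
  rcases hC.eq_or_lt with hC0 | hC0
  · rw [← hC0, Real.zero_rpow hδ0.ne', mul_zero]
    by_contra! hA0
    have h1 := hyp (max τ₀ (B / A / ν)) (le_max_left _ _)
    rw [← hC0, mul_zero, add_zero] at h1
    set τ := max τ₀ (B / A / ν)
    have h2 : B / A / ν ≤ τ := le_max_right _ _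
    rw [div_le_iff₀ hν, div_le_iff₀ hA0] at h2
    have h3 := Real.add_one_le_exp (ν * τ)
    have h4 : Real.exp (-ν * τ) * Real.exp (ν * τ) = 1 := by
      rw [← Real.exp_add]; simp
    have h5 : A * Real.exp (ν * τ) ≤ B := by
      calc A * Real.exp (ν * τ) ≤ (Real.exp (-ν * τ) * B) * Real.exp (ν * τ) := by gcongr
        _ = (Real.exp (-ν * τ) * Real.exp (ν * τ)) * B := by ring
        _ = B := by rw [h4, one_mul]
    nlinarith
  set s := (Real.log B - Real.log C) / (ν + μ) with hs
  have hlog : Real.log B = Real.log C + (ν + μ) * s := by rw [hs]; field_simp; ring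
  have hBs : B = C * Real.exp (μ * s) * Real.exp (ν * s) := by
    rw [mul_assoc, ← Real.exp_add]
    conv_lhs => rw [← Real.exp_log hB0, hlog, Real.exp_add, Real.exp_log hC0]
    ring_nf
  have hR : B ^ (1 - ν / (ν + μ)) * C ^ (ν / (ν + μ)) = C * Real.exp (μ * s) := by
    rw [Real.rpow_def_of_pos hB0, Real.rpow_def_of_pos hC0, ← Real.exp_add]
    conv_rhs => rw [← Real.exp_log hC0, ← Real.exp_add]
    congr 1
    rw [hlog]; field_simp; ring
  rw [mul_assoc, hR]
  set K := max 2 (Real.exp (μ * τ₀)) with hK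
  have hK2 : 2 ≤ K := le_max_left _ _
  have hKe : Real.exp (μ * τ₀) ≤ K := le_max_right _ _
  have hK0 : 0 < K := by linarith
  have hD : 0 < C * Real.exp (μ * s) := by positivity
  have hgen : ∀ τ, τ₀ ≤ τ → A ≤ (Real.exp (-ν * (τ - s)) + Real.exp (μ * (τ - s))) *
      (C * Real.exp (μ * s)) := by
    intro τ hτ
    refine (hyp τ hτ).trans_eq ?_
    have e1 : Real.exp (-ν * (τ - s)) = Real.exp (-ν * τ) * Real.exp (ν * s) := by
      rw [← Real.exp_add]; ring_nf
    have e2 : Real.exp (μ * τ) = Real.exp (μ * (τ - s)) * Real.exp (μ * s) := by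
      rw [← Real.exp_add]; ring_nf
    rw [e1, e2]
    conv_lhs => rw [hBs]
    ring
  rcases le_or_gt τ₀ s with h | h
  · have := hgen s h
    simp only [sub_self, mul_zero, Real.exp_zero] at this
    nlinarith
  rcases le_or_gt (ν * s) (Real.log K) with h' | h'
  · have := Real.exp_le_exp.2 h'
    rw [Real.exp_log hK0] at this
    nlinarith
  · have := core s τ₀ μ ν (Real.log K) hτ₀ hμ hν (Real.log_le_log (by norm_num) hK2)
      ((Real.le_log_iff_exp_le hK0).2 hKe) h h'
    rw [Real.exp_log hK0] at this
    exact (hgen τ₀ le_rfl).trans (mul_le_mul_of_nonneg_right this hD.le)
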